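/- Suppose Σ_f is almost rational, and let s ∈ Σ_f be a proper cluster with d_s > ρ_s. Then |s| is a power of p. -/

import Mathlib

open Polynomial
open scoped Classical

namespace ClusterPicture

variable {K Kbar : Type*} [Field K] [Field Kbar] [Algebra K Kbar]

lemma zero_lt_top' : (0 : WithTop ℚ) < ⊤ := by
  simp

lemma withTop_add_pos {a b : WithTop ℚ} (ha : 0 ≤ a) (hb : 0 < b) : 0 < a + b := by
  rcases eq_or_ne a ⊤ with h | h
  · subst h; rw [top_add]; exact zero_lt_top'
  · lift a to ℚ using h
    rcases eq_or_ne b ⊤ with h' | h'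
    · subst h'; rw [add_top]; exact zero_lt_top'
    · lift b to ℚ using h'
      have ha' : (0 : ℚ) ≤ a := by exact_mod_cast ha
      have hb' : (0 : ℚ) < b := by exact_mod_cast hb
      exact_mod_cast add_pos_of_nonneg_of_pos ha' hb'

/-- The setting of the paper: `K` is a complete discretely valued field, with valuation `v`
normalised so that `v(K^×) = ℤ`, `Kbar` is an algebraic closure of `K`, and `v` is (the unique)
extension of the valuation to a `ℚ ∪ {∞}`-valued valuation on `Kbar`. -/
structure Setup (K Kbar : Type*) [Field K] [Field Kbar] [Algebra K Kbar] : Type _ where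
  /-- the valuation on the algebraic closure -/
  v : Kbar → WithTop ℚ
  v_top_iff : ∀ x : Kbar, v x = ⊤ ↔ x = 0
  v_one : v 1 = 0
  v_neg : ∀ x : Kbar, v (-x) = v x
  v_mul : ∀ x y : Kbar, v (x * y) = v x + v y
  v_add : ∀ x y : Kbar, min (v x) (v y) ≤ v (x + y)
  /-- the valuation is normalised: nonzero elements of `K` have integer valuation -/
  v_base_int : ∀ x : K, x ≠ 0 → ∃ n : ℤ, v (algebraMap K Kbar x) = ((n : ℚ) : WithTop ℚ)
  /-- the valuation is surjective onto `ℤ` on `K^×`: there is a uniformiser -/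
  exists_uniformiser : ∃ π : K, v (algebraMap K Kbar π) = ((1 : ℚ) : WithTop ℚ)
  /-- `Kbar` is an algebraic closure of `K` -/
  algClosed : IsAlgClosed Kbar
  algebraic : Algebra.IsAlgebraic K Kbar
  /-- `K` is complete with respect to the valuation -/
  complete : ∀ a : ℕ → K,
    (∀ q : ℚ, ∃ N : ℕ, ∀ m, N ≤ m → ∀ n, N ≤ n →
      ((q : ℚ) : WithTop ℚ) ≤ v (algebraMap K Kbar (a m - a n))) →
    ∃ b : K, ∀ q : ℚ, ∃ N : ℕ, ∀ n, N ≤ n →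
      ((q : ℚ) : WithTop ℚ) ≤ v (algebraMap K Kbar (a n - b))

/-- Valuation of an element of the base field `K`. -/
def Setup.vK (S : Setup K Kbar) (x : K) : WithTop ℚ := S.v (algebraMap K Kbar x)

/-- The finite set of roots of `f` in the algebraic closure `Kbar`. -/
noncomputable def rootFinset (f : K[X]) : Finset Kbar :=
  (f.map (algebraMap K Kbar)).roots.toFinset

/-- A cluster for `f`: a nonempty subset of the set of roots of `f` cut out by a `v`-adic disc. -/
def IsCluster (S : Setup K Kbar) (f : K[X]) (s : Finset Kbar) : Prop :=
  s.Nonempty ∧ ∃ (z : Kbar) (δ : ℚ),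
    s = (rootFinset f).filter fun r => ((δ : ℚ) : WithTop ℚ) ≤ S.v (r - z)

/-- The depth `d_s = min_{r,r' ∈ s} v (r - r')` of a cluster. -/
noncomputable def depth (S : Setup K Kbar) (s : Finset Kbar) : WithTop ℚ :=
  s.inf fun r => s.inf fun r' => S.v (r - r')

/-- `min_{r ∈ s} v (r - z)`, for `z ∈ Kbar`. -/
noncomputable def dmin (S : Setup K Kbar) (s : Finset Kbar) (z : Kbar) : WithTop ℚ :=
  s.inf fun r => S.v (r - z)

/-- `min_{r ∈ s} v (r - w)`, for `w ∈ K`. -/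
noncomputable def dminK (S : Setup K Kbar) (s : Finset Kbar) (w : K) : WithTop ℚ :=
  dmin S s (algebraMap K Kbar w)

/-- `w ∈ K` is a rational centre of `s` if it maximises `min_{r ∈ s} v (r - w)`.
For a proper cluster `s` with rational centre `w`, the radius `ρ_s` is `dminK S s w`. -/
def IsRationalCentre (S : Setup K Kbar) (s : Finset Kbar) (w : K) : Prop :=
  ∀ w' : K, dminK S s w' ≤ dminK S s w

/-- A rational cluster: a cluster cut out by a disc with centre in `K`. -/
def IsRationalCluster (S : Setup K Kbar) (f : K[X]) (s : Finset Kbar) : Prop :=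
  s.Nonempty ∧ ∃ (w : K) (δ : ℚ),
    s = (rootFinset f).filter fun r => ((δ : ℚ) : WithTop ℚ) ≤ S.v (r - algebraMap K Kbar w)

/-- A cluster centred at `w ∈ K`. -/
def IsClusterCentredAt (S : Setup K Kbar) (f : K[X]) (w : K) (s : Finset Kbar) : Prop :=
  s.Nonempty ∧ ∃ δ : ℚ,
    s = (rootFinset f).filter fun r => ((δ : ℚ) : WithTop ℚ) ≤ S.v (r - algebraMap K Kbar w)

/-- The cluster picture of `f` is almost rational: every proper cluster `s` with
`|s| > |ρ_s|_p` satisfies `d_s = ρ_s`. -/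
def AlmostRational (S : Setup K Kbar) (f : K[X]) (p : ℕ) : Prop :=
  ∀ s : Finset Kbar, IsCluster S f s → 1 < s.card →
    ∀ (w : K) (ρ : ℚ), IsRationalCentre S s w → dminK S s w = ((ρ : ℚ) : WithTop ℚ) →
      padicNorm p ρ < (s.card : ℚ) → depth S s = ((ρ : ℚ) : WithTop ℚ)

/-- The slope of the `j`-th edge of the polygon with vertices `(i_j, c_j)`. -/
def NPslope {s : ℕ} (i : Fin (s + 1) → ℕ) (c : Fin (s + 1) → ℚ) (j : Fin s) : ℚ :=
  (c j.succ - c j.castSucc) / ((i j.succ : ℚ) - (i j.castSucc : ℚ))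

/-- `(i_0, c_0), …, (i_s, c_s)` are the vertices of the Newton polygon of `f`:
the points `(i_j, c_j)` are among the points `(m, v(a_m))`, the first and last vertices lie
above the trailing and leading coefficients, the slopes of consecutive edges strictly
increase, and every point `(m, v(a_m))` lies on or above (the line spanned by) every edge. -/
structure IsNPVertices (S : Setup K Kbar) (f : K[X]) (s : ℕ)
    (i : Fin (s + 1) → ℕ) (c : Fin (s + 1) → ℚ) : Prop where
  mono : StrictMono i
  first : i 0 = f.natTrailingDegree
  last : i (Fin.last s) = f.natDegree
  vert : ∀ j, S.vK (f.coeff (i j)) = ((c j : ℚ) : WithTop ℚ)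
  slope_mono : StrictMono (NPslope i c)
  support : ∀ (j : Fin s) (m : ℕ) (q : ℚ), S.vK (f.coeff m) = ((q : ℚ) : WithTop ℚ) →
    (c j.succ - c j.castSucc) * ((m : ℚ) - (i j.castSucc : ℚ)) ≤
      (q - c j.castSucc) * ((i j.succ : ℚ) - (i j.castSucc : ℚ))

/-- The valuation ring of `Kbar`. -/
def intRing (S : Setup K Kbar) : Subring Kbar where
  carrier := {x : Kbar | (0 : WithTop ℚ) ≤ S.v x}
  zero_mem' := by
    simp only [Set.mem_setOf_eq, (S.v_top_iff 0).mpr rfl]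
    exact le_top
  one_mem' := by
    simp only [Set.mem_setOf_eq, S.v_one]
    exact le_refl _
  add_mem' := by
    intro a b ha hb
    exact le_trans (le_min ha hb) (S.v_add a b)
  mul_mem' := by
    intro a b ha hb
    simp only [Set.mem_setOf_eq, S.v_mul a b]
    exact add_nonneg ha hb
  neg_mem' := by
    intro a ha
    simpa only [Set.mem_setOf_eq, S.v_neg] using ha

lemma mem_intRing {S : Setup K Kbar} {x : Kbar} :
    x ∈ intRing S ↔ (0 : WithTop ℚ) ≤ S.v x := Iff.rfl

/-- The maximal ideal of the valuation ring of `Kbar`. -/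
def maxIdeal (S : Setup K Kbar) : Ideal (intRing S) where
  carrier := {x : intRing S | (0 : WithTop ℚ) < S.v (x : Kbar)}
  zero_mem' := by
    show (0 : WithTop ℚ) < S.v ((0 : intRing S) : Kbar)
    rw [show ((0 : intRing S) : Kbar) = 0 from rfl, (S.v_top_iff 0).mpr rfl]
    exact zero_lt_top'
  add_mem' := by
    intro a b ha hb
    show (0 : WithTop ℚ) < S.v ((a : Kbar) + (b : Kbar))
    exact lt_of_lt_of_le (lt_min ha hb) (S.v_add _ _)
  smul_mem' := by
    intro c x hx
    show (0 : WithTop ℚ) < S.v ((c : Kbar) * (x : Kbar))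
    rw [S.v_mul]
    exact withTop_add_pos c.2 hx

/-- The residue field of `Kbar`; it is an algebraic closure of the residue field `k` of `K`. -/
abbrev Residue (S : Setup K Kbar) : Type _ := intRing S ⧸ maxIdeal S

/-- Reduction to the residue field (with junk value `0` on non-integral elements). -/
noncomputable def red (S : Setup K Kbar) (x : Kbar) : Residue S :=
  if h : (0 : WithTop ℚ) ≤ S.v x then Ideal.Quotient.mk (maxIdeal S) ⟨x, mem_intRing.mpr h⟩
  else 0

/-- The reduction `f̄|_L` of `f` along the edge `L` of its Newton polygon with endpoints
`(i₁, q₁)` and `(i₂, q₂)`, of slope `ρ = nρ / n` where `n` is the denominator of `ρ`;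
`π` is a uniformiser of `K`.  This is the reduction of `π^{-q₁}·(f|_L)(π^{-nρ}·x)`, where
`f|_L (x) = ∑_j a_{n j + i₁} x^j`. -/
noncomputable def redEdge (S : Setup K Kbar) (π : K) (f : K[X])
    (i₁ i₂ : ℕ) (q₁ nρ : ℤ) (n : ℕ) : Polynomial (Residue S) :=
  ∑ j ∈ Finset.range ((i₂ - i₁) / n + 1),
    Polynomial.C (red S (algebraMap K Kbar (f.coeff (n * j + i₁)) *
      (algebraMap K Kbar π) ^ (-(q₁ + (j : ℤ) * nρ)))) * Polynomial.X ^ j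

/-- `f` is NP-regular (`Δ_v`-regular in dimension 1): for every edge `L` of its Newton
polygon, the reduction `f̄|_L` has no multiple roots in the algebraic closure of the residue
field, i.e. is separable. -/
def NPRegular (S : Setup K Kbar) (π : K) (f : K[X]) : Prop :=
  ∀ (s : ℕ) (i : Fin (s + 1) → ℕ) (c : Fin (s + 1) → ℚ),
    IsNPVertices S f s i c →
    ∀ (j : Fin s) (q₁ nρ : ℤ) (n : ℕ),
      (q₁ : ℚ) = c j.castSucc →
      n = (NPslope i c j).den →
      (nρ : ℚ) = (n : ℚ) * NPslope i c j →
      (redEdge S π f (i j.castSucc) (i j.succ) q₁ nρ n).Separable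

/-- The vertex-index function of the Newton polygon of `f(x+w)`, in terms of the sizes of
the clusters `s_1 ⊂ … ⊂ s_{n+1}` centred at `w`; here `t` is the prescribed first index. -/
def vertIdx {n : ℕ} (t : ℕ) (s : Fin (n + 1) → Finset Kbar) : Fin (n + 2) → ℕ :=
  fun j => Fin.cases (motive := fun _ => ℕ) t (fun j' => (s j').card) j

/-- The vertex-value function of the Newton polygon of `f(x+w)`: the vertex over `|s_j|` has
second coordinate `ε_{s_j} - |s_j|·ρ_{s_j}`; `c0` is the prescribed value at the first vertex. -/
def vertVal {n : ℕ} (c0 : ℚ) (s : Fin (n + 1) → Finset Kbar) (ρ ε : Fin (n + 1) → ℚ) :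
    Fin (n + 2) → ℚ :=
  fun j => Fin.cases (motive := fun _ => ℚ) c0 (fun j' => ε j' - ((s j').card : ℚ) * ρ j') j

/-!
Let `ρ = ρ_s`, with rational centre `w`, let `z ∈ s` satisfy `v (z - w) = ρ`, let `p ^ k` be the
exact power of `p` dividing the denominator of `ρ`, and let `t ⊇ s` be the set of roots in the open
disc `v (x - z) > ρ`. This is a proper cluster of radius `ρ` and depth larger than `ρ`, so almost
rationality gives `|t| ≤ |ρ|_p ≤ p ^ k`.

On the other hand, as `r` runs over the conjugates of `z`, the quotients `(r - w) / (z - w)` are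
units, and those with `r` in the disc are the ones reducing to `1`. Since elements of `K` have
integer valuation, only exponents divisible by `p ^ k` occur in the reduction of the polynomial with
these quotients as roots. In characteristic `p` all its root multiplicities are then divisible by
`p ^ k`. Hence `t` consists of exactly `p ^ k` conjugates of `z`.

As `K` is complete, `v` extends uniquely to its algebraic closure, so `K`-automorphisms preserve
`v`. Therefore the closed discs of radius `d_s` around the elements of `t` all contain equally many
roots, namely `|s|`. They partition `t`, so `|s|` divides `p ^ k`.
-/

section Polynomial

variable {R ι : Type*} [CommRing R]

lemma expand_contract_of_coeff {q : ℕ} (hq : q ≠ 0) {P : R[X]}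
    (hP : ∀ i, P.coeff i ≠ 0 → q ∣ i) : expand R q (contract q P) = P := by
  ext i
  rw [coeff_expand hq.bot_lt, coeff_contract hq]
  split_ifs with hi
  · rw [Nat.div_mul_cancel hi]
  · exact (not_not.1 (mt (hP i) hi)).symm

lemma pow_dvd_rootMultiplicity_of_coeff [IsDomain R] (p : ℕ) [ExpChar R p] {k : ℕ} {P : R[X]}
    (hP : ∀ i, P.coeff i ≠ 0 → p ^ k ∣ i) (c : R) : p ^ k ∣ P.rootMultiplicity c := by
  rw [← expand_contract_of_coeff (expChar_pow_pos R p k).ne' hP, rootMultiplicity_expand_pow]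
  exact dvd_mul_right _ _

lemma rootMultiplicity_prod_X_sub_C [IsDomain R] (s : Finset ι) (b : ι → R) (c : R) :
    (∏ i ∈ s, (X - C (b i))).rootMultiplicity c = (s.filter fun i => b i = c).card := by
  have hprod : ∏ i ∈ s, (X - C (b i)) = ((s.val.map b).map fun a => X - C a).prod := by
    rw [Multiset.map_map, Finset.prod_eq_multiset_prod, Function.comp_def]
  rw [← count_roots, hprod, roots_multiset_prod_X_sub_C, Multiset.count_map, Finset.card_def,
    Finset.filter_val]
  simp only [eq_comm]

lemma coeff_prod_X_sub_C_mul (s : Finset ι) (u : R) (b : ι → R) (j : ℕ) :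
    (∏ i ∈ s, (X - C (u * b i))).coeff j * u ^ j
      = u ^ s.card * (∏ i ∈ s, (X - C (b i))).coeff j := by
  have hcomp : (∏ i ∈ s, (X - C (u * b i))).comp (C u * X)
      = C (u ^ s.card) * ∏ i ∈ s, (X - C (b i)) := by
    rw [Polynomial.prod_comp, C_pow, ← Finset.prod_const, ← Finset.prod_mul_distrib]
    refine Finset.prod_congr rfl fun i _ => ?_
    rw [sub_comp, X_comp, C_comp, C_mul, mul_sub]
  rw [← comp_C_mul_X_coeff, hcomp, coeff_C_mul]

end Polynomial

section Valuation

open IsLocalRing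

variable {A L Γ₀ ι : Type*} [CommRing A] [Field L] [Algebra A L]
  [LinearOrderedCommGroupWithZero Γ₀] (v : Valuation L Γ₀)

lemma residue_valuationSubring_eq_zero_iff {x : v.valuationSubring} :
    residue v.valuationSubring x = 0 ↔ v x < 1 :=
  (IsLocalRing.residue_eq_zero_iff x).trans v.mem_maximalIdeal_iff

lemma charP_residueField {p : ℕ} (hp : p.Prime) (hpv : v p < 1) :
    CharP (ResidueField v.valuationSubring) p := by
  refine (CharP.charP_iff_prime_eq_zero hp).2 ?_
  rw [← map_natCast (residue v.valuationSubring), residue_valuationSubring_eq_zero_iff]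
  exact_mod_cast hpv

lemma le_card_and_val_coeff_eq_pow {s : Finset ι} {u : L} (hu : u ≠ 0) {b : ι → L} {g : A[X]}
    (hg : g.map (algebraMap A L) = ∏ i ∈ s, (X - C (u * b i))) {j : ℕ}
    (hj : v ((∏ i ∈ s, (X - C (b i))).coeff j) = 1) :
    j ≤ s.card ∧ v (algebraMap A L (g.coeff j)) = v u ^ (s.card - j) := by
  have hjs : j ≤ s.card := by
    rw [← natDegree_finsetProd_X_sub_C_eq_card s b]
    refine le_natDegree_of_ne_zero fun h => ?_
    rw [h, map_zero] at hj
    exact zero_ne_one hj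
  refine ⟨hjs, mul_right_cancel₀ (pow_ne_zero j (v.ne_zero_iff.2 hu)) ?_⟩
  rw [← coeff_map, hg, ← map_pow, ← map_mul, coeff_prod_X_sub_C_mul, map_mul, hj, mul_one,
    map_pow, map_pow, pow_sub_mul_pow _ hjs]

lemma val_coeff_eq_one_of_coeff_residue_ne_zero {P : v.valuationSubring[X]} {j : ℕ}
    (hj : (P.map (residue v.valuationSubring)).coeff j ≠ 0) :
    v ((P.map (algebraMap v.valuationSubring L)).coeff j) = 1 := by
  rw [coeff_map, Ne, residue_valuationSubring_eq_zero_iff, not_lt] at hj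
  rw [coeff_map]
  exact le_antisymm (P.coeff j).2 hj

lemma dvd_of_coeff_residue_ne_zero {q : ℕ} {s : Finset ι} {u : L} (hu : u ≠ 0)
    {β : ι → v.valuationSubring} (hβ : ∀ i ∈ s, v (β i) = 1)
    (hord : ∀ (n : ℕ) (x : A), v (algebraMap A L x) = v u ^ n → q ∣ n) {g : A[X]}
    (hg : g.map (algebraMap A L) = ∏ i ∈ s, (X - C (u * β i))) {j : ℕ}
    (hj : (∏ i ∈ s, (X - C (residue v.valuationSubring (β i)))).coeff j ≠ 0) :
    q ∣ j := by
  -- If the coefficient of index `i` survives in the residue field, then that of `g` has the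
  -- valuation of `u ^ (s.card - i)`. Compare `i = j` with `i = 0`, which survives as every `β i`
  -- is a unit.
  have key : ∀ i, (∏ i ∈ s, (X - C (residue v.valuationSubring (β i)))).coeff i ≠ 0 →
      i ≤ s.card ∧ q ∣ s.card - i := by
    intro i hi
    have hval := val_coeff_eq_one_of_coeff_residue_ne_zero v (P := ∏ i ∈ s, (X - C (β i))) (j := i)
      (by simpa only [Polynomial.map_prod, Polynomial.map_sub, map_X, map_C] using hi)
    simp only [Polynomial.map_prod, Polynomial.map_sub, map_X, map_C] at hval
    exact (le_card_and_val_coeff_eq_pow v hu hg hval).imp_right (hord _ _)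
  have hzero : (∏ i ∈ s, (X - C (residue v.valuationSubring (β i)))).coeff 0 ≠ 0 := by
    simp only [coeff_zero_prod, coeff_sub, coeff_X_zero, coeff_C_zero, zero_sub]
    refine Finset.prod_ne_zero_iff.2 fun i hi => neg_ne_zero.2 ?_
    rw [Ne, residue_valuationSubring_eq_zero_iff, hβ i hi]
    exact lt_irrefl 1
  exact (Nat.dvd_sub_iff_right (key j hj).1 (key 0 hzero).2).1 (key j hj).2

lemma pow_dvd_card_filter_val_sub_lt {p k : ℕ} (hp : p.Prime) (hpv : v p < 1) {u : L}
    (hu : u ≠ 0) (hord : ∀ (n : ℕ) (x : A), v (algebraMap A L x) = v u ^ n → p ^ k ∣ n)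
    {s : Finset ι} {a : ι → L} (ha : ∀ i ∈ s, v (a i) = v u) {g : A[X]}
    (hg : g.map (algebraMap A L) = ∏ i ∈ s, (X - C (a i))) :
    p ^ k ∣ (s.filter fun i => v (a i - u) < v u).card := by
  have hvu : v u ≠ 0 := v.ne_zero_iff.2 hu
  have hquot : ∀ i ∈ s, v (a i / u) = 1 := fun i hi => by rw [map_div₀, ha i hi, div_self hvu]
  choose! β hβ using fun i hi =>
    show ∃ b : v.valuationSubring, (b : L) = a i / u from ⟨⟨a i / u, (hquot i hi).le⟩, rfl⟩
  have hmul : ∀ i ∈ s, u * β i = a i := fun i hi => by rw [hβ i hi, mul_div_cancel₀ _ hu]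
  have hclose : ∀ i ∈ s, (v (a i - u) < v u ↔ residue v.valuationSubring (β i) = 1) := by
    intro i hi
    have hsub : ((β i - 1 : v.valuationSubring) : L) = (a i - u) / u := by
      push_cast
      rw [hβ i hi, sub_div, div_self hu]
    rw [← sub_eq_zero, ← map_one (residue v.valuationSubring), ← map_sub,
      residue_valuationSubring_eq_zero_iff, hsub, map_div₀, div_lt_one₀ (zero_lt_iff.2 hvu)]
  have := charP_residueField v hp hpv
  have := Fact.mk hp
  rw [Finset.filter_congr hclose, ← rootMultiplicity_prod_X_sub_C]
  refine pow_dvd_rootMultiplicity_of_coeff p (fun j hj =>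
    dvd_of_coeff_residue_ne_zero v hu (fun i hi => ?_) hord (hg.trans ?_) hj) 1
  · rw [hβ i hi, hquot i hi]
  · exact Finset.prod_congr rfl fun i hi => by rw [hmul i hi]

end Valuation

section ExpNeg

/-- The map `a ↦ exp (-a)`, with `exp (-∞) = 0`; it turns the additive valuation of a `Setup` into
an absolute value. -/
noncomputable def expNeg : WithTop ℚ → ℝ :=
  WithTop.recTopCoe 0 fun q => Real.exp (-q)

@[simp] lemma expNeg_top : expNeg ⊤ = 0 := rfl

@[simp] lemma expNeg_coe (q : ℚ) : expNeg q = Real.exp (-q) := rfl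

lemma expNeg_coe_pos (q : ℚ) : 0 < expNeg q := Real.exp_pos _

lemma expNeg_strictAnti : StrictAnti expNeg := by
  refine WithTop.strictAnti_iff.2 ⟨fun q r h => ?_, expNeg_coe_pos⟩
  simpa using h

lemma expNeg_nonneg (a : WithTop ℚ) : 0 ≤ expNeg a :=
  expNeg_strictAnti.antitone le_top

lemma expNeg_add (a b : WithTop ℚ) : expNeg (a + b) = expNeg a * expNeg b := by
  cases a <;> cases b
  case coe.coe q r =>
    rw [← WithTop.coe_add, expNeg_coe, expNeg_coe, expNeg_coe, ← Real.exp_add, Rat.cast_add,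
      neg_add]
  all_goals simp

lemma exists_expNeg_coe_lt {ε : ℝ} (hε : 0 < ε) : ∃ q : ℚ, expNeg q < ε := by
  obtain ⟨q, hq⟩ := exists_rat_gt (-Real.log ε)
  exact ⟨q, (Real.lt_log_iff_exp_lt hε).1 (neg_lt.1 hq)⟩

end ExpNeg

namespace Setup

variable (S : Setup K Kbar)

/-- The valuation of a `Setup` as an additive valuation in the sense of Mathlib. -/
def toAddValuation : AddValuation Kbar (WithTop ℚ) :=
  AddValuation.of S.v ((S.v_top_iff 0).2 rfl) S.v_one S.v_add S.v_mul

/-- The valuation of a `Setup` as a multiplicative valuation in the sense of Mathlib. -/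
def toValuation : Valuation Kbar (Multiplicative (WithTop ℚ)ᵒᵈ) := S.toAddValuation.toValuation

lemma toValuation_lt_iff {x y : Kbar} : S.toValuation x < S.toValuation y ↔ S.v y < S.v x := Iff.rfl

lemma v_zero : S.v 0 = ⊤ := S.toAddValuation.map_zero

lemma v_sub_swap (x y : Kbar) : S.v (x - y) = S.v (y - x) :=
  S.toAddValuation.map_sub_swap x y

lemma le_v_sub_trans {d : WithTop ℚ} {x y z : Kbar} (hxy : d ≤ S.v (x - y))
    (hyz : d ≤ S.v (y - z)) : d ≤ S.v (x - z) :=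
  sub_add_sub_cancel x y z ▸ S.toAddValuation.map_le_add hxy hyz

lemma lt_v_sub_trans {d : WithTop ℚ} {x y z : Kbar} (hxy : d < S.v (x - y))
    (hyz : d < S.v (y - z)) : d < S.v (x - z) :=
  sub_add_sub_cancel x y z ▸ S.toAddValuation.map_lt_add hxy hyz

lemma den_dvd_of_v_algebraMap_eq_nsmul {ρ : ℚ} {n : ℕ} {x : K}
    (h : S.v (algebraMap K Kbar x) = n • (ρ : WithTop ℚ)) : ρ.den ∣ n := by
  rcases eq_or_ne n 0 with rfl | hn
  · exact dvd_zero _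
  have hx : x ≠ 0 := by
    rintro rfl
    rw [map_zero, S.v_zero] at h
    exact WithTop.coe_ne_top (a := n • ρ) (by rw [h, WithTop.coe_nsmul])
  obtain ⟨m, hm⟩ := S.v_base_int x hx
  have hmn : (m : ℚ) = n * ρ := by
    rw [hm, ← WithTop.coe_nsmul, WithTop.coe_inj] at h
    rw [h, nsmul_eq_mul]
  have hρ : ρ = Rat.divInt m n := by
    rw [Rat.divInt_eq_div, hmn, Int.cast_natCast, mul_div_cancel_left₀ _ (by exact_mod_cast hn)]
  exact_mod_cast hρ ▸ Rat.den_dvd m n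

/-- The absolute value `|x| = exp (-v x)` on `Kbar`. -/
noncomputable def abv : AbsoluteValue Kbar ℝ where
  toFun x := expNeg (S.v x)
  map_mul' x y := by rw [S.v_mul, expNeg_add]
  nonneg' x := expNeg_nonneg _
  eq_zero' x := by rw [← expNeg_top, expNeg_strictAnti.injective.eq_iff, S.v_top_iff]
  add_le' x y := by
    refine (expNeg_strictAnti.antitone (S.v_add x y)).trans ?_
    rw [expNeg_strictAnti.antitone.map_min]
    exact max_le_add_of_nonneg (expNeg_nonneg _) (expNeg_nonneg _)

lemma abv_add_le_max (x y : Kbar) : S.abv (x + y) ≤ max (S.abv x) (S.abv y) :=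
  (expNeg_strictAnti.antitone (S.v_add x y)).trans_eq expNeg_strictAnti.antitone.map_min

/-- `K` as a normed field, with norm the restriction of `Setup.abv`. -/
noncomputable abbrev normedField : NormedField K :=
  (S.abv.comp (algebraMap K Kbar).injective).toNormedField

/-- `Setup.normedField` with nontriviality of the norm, witnessed by a uniformiser. -/
noncomputable abbrev nontriviallyNormedField : NontriviallyNormedField K :=
  letI := S.normedField
  .ofNormNeOne <| by
    obtain ⟨π, hπ⟩ := S.exists_uniformiser
    have hnorm : ‖π‖ = Real.exp (-1) :=
      (congrArg expNeg hπ).trans (by rw [expNeg_coe, Rat.cast_one])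
    refine ⟨π, norm_pos_iff.1 ?_, ?_⟩
    · rw [hnorm]; exact Real.exp_pos _
    · rw [hnorm]; simp

lemma isUltrametricDist :
    letI := S.normedField
    IsUltrametricDist K :=
  letI := S.normedField
  IsUltrametricDist.isUltrametricDist_of_forall_norm_add_le_max_norm fun a b => by
    change S.abv (algebraMap K Kbar (a + b)) ≤ _
    rw [map_add]
    exact S.abv_add_le_max _ _

lemma completeSpace :
    letI := S.normedField
    CompleteSpace K := by
  let := S.normedField
  have hdist : ∀ x y : K, dist x y = expNeg (S.v (algebraMap K Kbar (x - y))) := dist_eq_norm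
  refine Metric.complete_of_cauchySeq_tendsto fun u hu => ?_
  obtain ⟨b, hb⟩ := S.complete u fun q => by
    obtain ⟨N, hN⟩ := Metric.cauchySeq_iff.1 hu (expNeg q) (expNeg_coe_pos q)
    refine ⟨N, fun m hm n hn => (expNeg_strictAnti.lt_iff_gt.1 ?_).le⟩
    rw [← hdist]
    exact hN m hm n hn
  refine ⟨b, Metric.tendsto_atTop.2 fun ε hε => ?_⟩
  obtain ⟨q, hq⟩ := exists_expNeg_coe_lt hε
  obtain ⟨N, hN⟩ := hb q
  refine ⟨N, fun n hn => ?_⟩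
  rw [hdist]
  exact (expNeg_strictAnti.antitone (hN n hn)).trans_lt hq

lemma v_algEquiv (σ : Kbar ≃ₐ[K] Kbar) (x : Kbar) : S.v (σ x) = S.v x := by
  let := S.nontriviallyNormedField
  have := S.isUltrametricDist
  have := S.completeSpace
  have := S.algebraic
  have habv : ∀ y : Kbar, S.abv y = spectralNorm K Kbar y :=
    spectralNorm_unique_field_norm_ext fun _ => rfl
  refine expNeg_strictAnti.injective ?_
  change S.abv (σ x) = S.abv x
  rw [habv, habv, ← spectralNorm_eq_of_equiv]

end Setup

section Discs

lemma mem_rootFinset {f : K[X]} {r : Kbar} :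
    r ∈ (rootFinset f : Finset Kbar) ↔ f ≠ 0 ∧ aeval r f = 0 := by
  rw [rootFinset, Multiset.mem_toFinset, ← aroots_def, mem_aroots]

lemma rootFinset_subset_of_dvd {f g : K[X]} (hf : f ≠ 0) (hgf : g ∣ f) :
    (rootFinset g : Finset Kbar) ⊆ rootFinset f := fun _ hr =>
  mem_rootFinset.2 ⟨hf, aeval_eq_zero_of_dvd_aeval_eq_zero hgf (mem_rootFinset.1 hr).2⟩

lemma algEquiv_mem_rootFinset {f : K[X]} (σ : Kbar ≃ₐ[K] Kbar) {r : Kbar} :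
    σ r ∈ (rootFinset f : Finset Kbar) ↔ r ∈ (rootFinset f : Finset Kbar) := by
  rw [mem_rootFinset, mem_rootFinset, aeval_algHom_apply, map_eq_zero_iff σ σ.injective]

variable (S : Setup K Kbar)

/-- The set of roots of `f` in the open disc `v (x - z) > ρ`. -/
noncomputable def openDiscRoots (f : K[X]) (z : Kbar) (ρ : WithTop ℚ) : Finset Kbar :=
  (rootFinset f).filter fun r => ρ < S.v (r - z)

/-- The set of roots of `f` in the closed disc `v (x - z) ≥ d`. -/
noncomputable def closedDiscRoots (f : K[X]) (z : Kbar) (d : WithTop ℚ) : Finset Kbar :=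
  (rootFinset f).filter fun r => d ≤ S.v (r - z)

variable {S} {f : K[X]} {r z : Kbar} {d ρ : WithTop ℚ}

lemma mem_openDiscRoots :
    r ∈ openDiscRoots S f z ρ ↔ r ∈ (rootFinset f : Finset Kbar) ∧ ρ < S.v (r - z) :=
  Finset.mem_filter

lemma mem_closedDiscRoots :
    r ∈ closedDiscRoots S f z d ↔ r ∈ (rootFinset f : Finset Kbar) ∧ d ≤ S.v (r - z) :=
  Finset.mem_filter

lemma openDiscRoots_subset_of_dvd {g : K[X]} (hf : f ≠ 0) (hgf : g ∣ f) :
    openDiscRoots S g z ρ ⊆ openDiscRoots S f z ρ :=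
  Finset.filter_subset_filter _ (rootFinset_subset_of_dvd hf hgf)

lemma closedDiscRoots_subset_openDiscRoots (hd : ρ < d) (hr : r ∈ openDiscRoots S f z ρ) :
    closedDiscRoots S f r d ⊆ openDiscRoots S f z ρ := fun x hx => by
  rw [mem_closedDiscRoots] at hx
  rw [mem_openDiscRoots] at hr ⊢
  exact ⟨hx.1, S.lt_v_sub_trans (hd.trans_le hx.2) hr.2⟩

lemma closedDiscRoots_eq_of_mem (hr : r ∈ closedDiscRoots S f z d) :
    closedDiscRoots S f r d = closedDiscRoots S f z d := by
  have hrz := (mem_closedDiscRoots.1 hr).2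
  refine Finset.filter_congr fun x _ => ⟨fun hx => S.le_v_sub_trans hx hrz, fun hx => ?_⟩
  exact S.le_v_sub_trans hx (S.v_sub_swap r z ▸ hrz)

lemma mem_closedDiscRoots_self (hz : z ∈ (rootFinset f : Finset Kbar)) :
    z ∈ closedDiscRoots S f z d :=
  mem_closedDiscRoots.2 ⟨hz, by rw [sub_self, S.v_zero]; exact le_top⟩

lemma mem_openDiscRoots_self (hz : z ∈ (rootFinset f : Finset Kbar)) (hρ : ρ ≠ ⊤) :
    z ∈ openDiscRoots S f z ρ :=
  mem_openDiscRoots.2 ⟨hz, by rw [sub_self, S.v_zero]; exact hρ.lt_top⟩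

lemma lt_depth_openDiscRoots (hρ : ρ ≠ ⊤) : ρ < depth S (openDiscRoots S f z ρ) := by
  refine (Finset.lt_inf_iff hρ.lt_top).2 fun a ha => (Finset.lt_inf_iff hρ.lt_top).2 fun b hb => ?_
  rw [mem_openDiscRoots] at ha hb
  exact S.lt_v_sub_trans ha.2 (S.v_sub_swap b z ▸ hb.2)

lemma isCluster_openDiscRoots (hz : z ∈ (rootFinset f : Finset Kbar)) (hρ : ρ ≠ ⊤) :
    IsCluster S f (openDiscRoots S f z ρ) := by
  have hlt : ρ < (openDiscRoots S f z ρ).inf fun r => S.v (r - z) :=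
    (Finset.lt_inf_iff hρ.lt_top).2 fun r hr => (mem_openDiscRoots.1 hr).2
  obtain ⟨δ, hρδ, hδ⟩ := WithTop.lt_iff_exists_coe_btwn.1 hlt
  refine ⟨⟨z, mem_openDiscRoots_self hz hρ⟩, z, δ, Finset.filter_congr fun r hr => ⟨fun h => ?_,
    hρδ.trans_le⟩⟩
  exact hδ.le.trans (Finset.inf_le (f := fun r => S.v (r - z)) (mem_openDiscRoots.2 ⟨hr, h⟩))

variable {s : Finset Kbar}

lemma depth_le {r' : Kbar} (hr : r ∈ s) (hr' : r' ∈ s) : depth S s ≤ S.v (r - r') :=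
  (Finset.inf_le (f := fun r => s.inf fun r' => S.v (r - r')) hr).trans
    (Finset.inf_le (f := fun r' => S.v (r - r')) hr')

lemma IsCluster.eq_closedDiscRoots (hs : IsCluster S f s) (hr : r ∈ s) :
    s = closedDiscRoots S f r (depth S s) := by
  obtain ⟨-, z, δ, hδ⟩ := hs
  have hmem : ∀ x, x ∈ s ↔ x ∈ (rootFinset f : Finset Kbar) ∧ δ ≤ S.v (x - z) := fun x => by
    rw [hδ, Finset.mem_filter]
  have hδs : (δ : WithTop ℚ) ≤ depth S s := Finset.le_inf fun a ha => Finset.le_inf fun b hb =>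
    S.le_v_sub_trans ((hmem a).1 ha).2 (S.v_sub_swap b z ▸ ((hmem b).1 hb).2)
  ext x
  rw [mem_closedDiscRoots]
  refine ⟨fun hx => ⟨((hmem x).1 hx).1, depth_le hx hr⟩, fun hx => (hmem x).2 ⟨hx.1, ?_⟩⟩
  exact S.le_v_sub_trans (hδs.trans hx.2) ((hmem r).1 hr).2

lemma card_closedDiscRoots_algEquiv (σ : Kbar ≃ₐ[K] Kbar) (z : Kbar) :
    (closedDiscRoots S f (σ z) d).card = (closedDiscRoots S f z d).card := by
  symm
  refine Finset.card_equiv σ.toEquiv fun x => ?_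
  rw [mem_closedDiscRoots, mem_closedDiscRoots, AlgEquiv.toEquiv_eq_coe, EquivLike.coe_coe,
    algEquiv_mem_rootFinset, ← map_sub, S.v_algEquiv]

lemma dvd_card_openDiscRoots {n : ℕ} (hd : ρ < d)
    (hn : ∀ r ∈ openDiscRoots S f z ρ, (closedDiscRoots S f r d).card = n) :
    n ∣ (openDiscRoots S f z ρ).card := by
  rw [Finset.card_eq_sum_card_image (fun r => closedDiscRoots S f r d)]
  refine Finset.dvd_sum fun t ht => ?_
  obtain ⟨r, hr, rfl⟩ := Finset.mem_image.1 ht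
  rw [← hn r hr]
  refine dvd_of_eq (congrArg Finset.card (Finset.ext fun x => ?_))
  rw [Finset.mem_filter]
  refine ⟨fun hx => ⟨closedDiscRoots_subset_openDiscRoots hd hr hx, closedDiscRoots_eq_of_mem hx⟩,
    fun ⟨hx, hxr⟩ => hxr ▸ mem_closedDiscRoots_self (mem_openDiscRoots.1 hx).1⟩

end Discs

section Radius

variable {S : Setup K Kbar} {f : K[X]} {s t : Finset Kbar} {w : K} {z : Kbar} {ρ : ℚ} {p : ℕ}

lemma exists_v_sub_eq_dminK (hs : s.Nonempty) (w : K) :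
    ∃ r ∈ s, S.v (r - algebraMap K Kbar w) = dminK S s w := by
  obtain ⟨r, hr, hrw⟩ := Finset.exists_mem_eq_inf s hs fun r => S.v (r - algebraMap K Kbar w)
  exact ⟨r, hr, hrw.symm⟩

lemma IsRationalCentre.of_subset (hw : IsRationalCentre S s w) (hst : s ⊆ t)
    (h : dminK S t w = dminK S s w) : IsRationalCentre S t w := fun w' =>
  h ▸ (Finset.inf_mono hst).trans (hw w')

lemma dminK_openDiscRoots (hz : z ∈ (rootFinset f : Finset Kbar))
    (hzw : S.v (z - algebraMap K Kbar w) = ρ) : dminK S (openDiscRoots S f z ρ) w = ρ := by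
  refine le_antisymm ?_ (Finset.le_inf fun r hr => ?_)
  · exact (Finset.inf_le (f := fun r => S.v (r - algebraMap K Kbar w))
      (mem_openDiscRoots_self hz WithTop.coe_ne_top)).trans_eq hzw
  · exact S.le_v_sub_trans (mem_openDiscRoots.1 hr).2.le hzw.ge

lemma AlmostRational.card_openDiscRoots_le (hf : AlmostRational S f p)
    (hz : z ∈ (rootFinset f : Finset Kbar)) (hcard : 1 < (openDiscRoots S f z ρ).card)
    (hw : IsRationalCentre S (openDiscRoots S f z ρ) w)
    (hzw : S.v (z - algebraMap K Kbar w) = ρ) :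
    ((openDiscRoots S f z ρ).card : ℚ) ≤ padicNorm p ρ := by
  by_contra! hlt
  exact (lt_depth_openDiscRoots WithTop.coe_ne_top).ne'
    (hf _ (isCluster_openDiscRoots hz WithTop.coe_ne_top) hcard w ρ hw
      (dminK_openDiscRoots hz hzw) hlt)

lemma padicNorm_le_pow_padicValNat_den [Fact p.Prime] (ρ : ℚ) :
    padicNorm p ρ ≤ (p : ℚ) ^ padicValNat p ρ.den := by
  rcases eq_or_ne ρ 0 with rfl | hρ
  · rw [padicNorm.zero]; positivity
  have hp : (1 : ℚ) ≤ p := by exact_mod_cast (Fact.out : p.Prime).one_le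
  rw [padicNorm.eq_zpow_of_nonzero hρ, ← zpow_natCast]
  refine zpow_le_zpow_right₀ hp ?_
  rw [padicValRat_def]
  omega

end Radius

section Conjugates

variable {S : Setup K Kbar}

lemma exists_algEquiv_of_mem_rootFinset_minpoly (S : Setup K Kbar) {z r : Kbar}
    (hr : r ∈ (rootFinset (minpoly K z) : Finset Kbar)) : ∃ σ : Kbar ≃ₐ[K] Kbar, σ z = r := by
  have := S.algebraic
  have := S.algClosed
  have : IsAlgClosure K Kbar := ⟨S.algClosed, S.algebraic⟩
  have : Normal K Kbar := IsAlgClosure.normal K Kbar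
  exact minpoly.exists_algEquiv_of_root' (S.algebraic.isAlgebraic z) (mem_rootFinset.1 hr).2

lemma map_eq_prod_rootFinset (S : Setup K Kbar) {g : K[X]} (hg : g.Monic) (hsep : g.Separable) :
    g.map (algebraMap K Kbar) = ∏ r ∈ rootFinset g, (X - C r) := by
  have := S.algClosed
  rw [Finset.prod_eq_multiset_prod, rootFinset, Multiset.toFinset_val,
    (nodup_roots hsep.map).dedup]
  exact (IsAlgClosed.splits _).eq_prod_roots_of_monic (hg.map _)

lemma v_sub_algebraMap_of_mem_rootFinset_minpoly (S : Setup K Kbar) {z r : Kbar}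
    (hr : r ∈ (rootFinset (minpoly K z) : Finset Kbar)) (w : K) :
    S.v (r - algebraMap K Kbar w) = S.v (z - algebraMap K Kbar w) := by
  obtain ⟨σ, rfl⟩ := exists_algEquiv_of_mem_rootFinset_minpoly S hr
  rw [← S.v_algEquiv σ (z - _), map_sub, σ.commutes]

lemma map_comp_X_add_C_eq_prod_rootFinset (S : Setup K Kbar) {g : K[X]} (hg : g.Monic)
    (hsep : g.Separable) (w : K) :
    (g.comp (X + C w)).map (algebraMap K Kbar)
      = ∏ r ∈ rootFinset g, (X - C (r - algebraMap K Kbar w)) := by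
  rw [Polynomial.map_comp, map_eq_prod_rootFinset S hg hsep, Polynomial.prod_comp]
  refine Finset.prod_congr rfl fun r _ => ?_
  rw [Polynomial.map_add, map_X, map_C, sub_comp, X_comp, C_comp, C_sub]
  ring

lemma pow_dvd_card_openDiscRoots_minpoly {p k : ℕ} (hp : p.Prime) (hpv : 0 < S.vK (p : K))
    {z : Kbar} (hz : (minpoly K z).Separable) {w : K} {ρ : ℚ}
    (hzw : S.v (z - algebraMap K Kbar w) = ρ) (hk : p ^ k ∣ ρ.den) :
    p ^ k ∣ (openDiscRoots S (minpoly K z) z ρ).card := by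
  have hu : z - algebraMap K Kbar w ≠ 0 := by
    rw [Ne, ← S.v_top_iff, hzw]
    exact WithTop.coe_ne_top
  have hord : ∀ (n : ℕ) (x : K), S.toValuation (algebraMap K Kbar x)
      = S.toValuation (z - algebraMap K Kbar w) ^ n → p ^ k ∣ n := fun n x hx =>
    hk.trans (S.den_dvd_of_v_algebraMap_eq_nsmul (hx.trans (congrArg (n • ·) hzw)))
  have hpv' : S.toValuation p < 1 := by
    rw [← map_one S.toValuation, S.toValuation_lt_iff, S.v_one, ← map_natCast (algebraMap K Kbar)]
    exact hpv
  have hdvd := pow_dvd_card_filter_val_sub_lt S.toValuation hp hpv' hu hord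
    (fun r hr => v_sub_algebraMap_of_mem_rootFinset_minpoly S hr w)
    (map_comp_X_add_C_eq_prod_rootFinset S (minpoly.monic (S.algebraic.isIntegral.1 z)) hz w)
  simp only [sub_sub_sub_cancel_right, S.toValuation_lt_iff, hzw] at hdvd
  exact hdvd

end Conjugates

section AlmostRational

variable {S : Setup K Kbar} {p : ℕ} {f : K[X]} {z : Kbar} {w : K} {ρ : ℚ}

lemma AlmostRational.openDiscRoots_eq_minpoly_and_card_eq_pow (hf : AlmostRational S f p)
    (hp : p.Prime) (hpv : 0 < S.vK (p : K)) (hsep : f.Separable)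
    (hz : z ∈ (rootFinset f : Finset Kbar)) (hcard : 1 < (openDiscRoots S f z ρ).card)
    (hw : IsRationalCentre S (openDiscRoots S f z ρ) w)
    (hzw : S.v (z - algebraMap K Kbar w) = ρ) :
    openDiscRoots S f z ρ = openDiscRoots S (minpoly K z) z ρ ∧
      (openDiscRoots S f z ρ).card = p ^ padicValNat p ρ.den := by
  have := Fact.mk hp
  have hmin : minpoly K z ∣ f := minpoly.dvd K z (mem_rootFinset.1 hz).2
  have hsub : openDiscRoots S (minpoly K z) z ρ ⊆ openDiscRoots S f z ρ :=
    openDiscRoots_subset_of_dvd hsep.ne_zero hmin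
  have hpos : 0 < (openDiscRoots S (minpoly K z) z ρ).card :=
    Finset.card_pos.2 ⟨z, mem_openDiscRoots_self
      (mem_rootFinset.2 ⟨minpoly.ne_zero (S.algebraic.isIntegral.1 z), minpoly.aeval K z⟩)
      WithTop.coe_ne_top⟩
  have hge : p ^ padicValNat p ρ.den ≤ (openDiscRoots S (minpoly K z) z ρ).card :=
    Nat.le_of_dvd hpos <|
      pow_dvd_card_openDiscRoots_minpoly hp hpv (hsep.of_dvd hmin) hzw pow_padicValNat_dvd
  have hle : (openDiscRoots S f z ρ).card ≤ p ^ padicValNat p ρ.den := by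
    exact_mod_cast (hf.card_openDiscRoots_le hz hcard hw hzw).trans
      (padicNorm_le_pow_padicValNat_den ρ)
  exact ⟨(Finset.eq_of_subset_of_card_le hsub (hle.trans hge)).symm,
    hle.antisymm (hge.trans (Finset.card_le_card hsub))⟩

end AlmostRational

/-- **Clusters of non-maximal radius have `p`-power size.** Suppose `Σ_f` is almost rational
and `s` is a proper cluster with `d_s > ρ_s`. Then `|s|` is a power of `p`. -/
theorem card_p_pow_of_almostRational
    (S : Setup K Kbar)
    (p : ℕ) (hp : p.Prime) (hres : ((0 : ℚ) : WithTop ℚ) < S.vK (p : K))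
    (f : K[X]) (hsep : f.Separable) (hdeg : 1 ≤ f.natDegree)
    (hAR : AlmostRational S f p)
    (s : Finset Kbar) (hs : IsCluster S f s) (hproper : 1 < s.card)
    (w : K) (hw : IsRationalCentre S s w)
    (hlt : dminK S s w < depth S s) :
    ∃ m : ℕ, s.card = p ^ m := by
  obtain ⟨z, hz, hzw⟩ := exists_v_sub_eq_dminK hs.1 w
  obtain ⟨ρ, hρ⟩ := WithTop.ne_top_iff_exists.1 hlt.ne_top
  have hsz : s = closedDiscRoots S f z (depth S s) := hs.eq_closedDiscRoots hz
  have hzf : z ∈ rootFinset f := (mem_closedDiscRoots.1 (hsz ▸ hz)).1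
  rw [← hρ] at hzw hlt
  have hst : s ⊆ openDiscRoots S f z ρ := hsz.trans_subset <|
    closedDiscRoots_subset_openDiscRoots hlt (mem_openDiscRoots_self hzf WithTop.coe_ne_top)
  have hwt : IsRationalCentre S (openDiscRoots S f z ρ) w :=
    hw.of_subset hst ((dminK_openDiscRoots hzf hzw).trans hρ)
  obtain ⟨hconj, hcard⟩ := hAR.openDiscRoots_eq_minpoly_and_card_eq_pow hp hres hsep hzf
    (hproper.trans_le (Finset.card_le_card hst)) hwt hzw
  have hdvd : s.card ∣ (openDiscRoots S f z ρ).card := by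
    refine dvd_card_openDiscRoots hlt fun r hr => ?_
    obtain ⟨σ, rfl⟩ :=
      exists_algEquiv_of_mem_rootFinset_minpoly S (mem_openDiscRoots.1 (hconj ▸ hr)).1
    rw [card_closedDiscRoots_algEquiv, ← hsz]
  obtain ⟨m, -, hm⟩ := (Nat.dvd_prime_pow hp).1 (hcard ▸ hdvd)
  exact ⟨m, hm⟩

end ClusterPicture
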